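/- arXiv:2110.12699 — 7 statements merged into one kernel-verified Lean document; each statement's English description precedes it below -/
import Mathlib

section
/- TeamLTL is a conservative extension of LTL: for every TeamLTL formula φ, every trace t, and every initial tef τ for the singleton team {t} (index set a one-element set), ({t},τ) ⊨ φ if and only if t ⊩ φ. -/
namespace TTS

abbrev Trace (AP : Type) := ℕ → Set AP

def IsStutTef {ι : Type} (τ : ℕ → ι → ℕ) : Prop :=
  ∀ n i, τ n i ≤ τ (n + 1) i

def IsTef {ι : Type} (τ : ℕ → ι → ℕ) : Prop :=
  IsStutTef τ ∧ (∀ n, τ n ≠ τ (n + 1)) ∧ (∀ n i, τ (n + 1) i ≤ τ n i + 1)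

def Initial {ι : Type} (τ : ℕ → ι → ℕ) : Prop := ∀ i, τ 0 i = 0

def shift {ι : Type} (τ : ℕ → ι → ℕ) (k : ℕ) : ℕ → ι → ℕ := fun n => τ (n + k)

inductive Formula (AP : Type) : Type
  | atom : AP → Formula AP
  | natom : AP → Formula AP
  | and : Formula AP → Formula AP → Formula AP
  | or : Formula AP → Formula AP → Formula AP
  | X : Formula AP → Formula AP
  | U : Formula AP → Formula AP → Formula AP
  | W : Formula AP → Formula AP → Formula AP

def sat {AP : Type} : {ι : Type} → (ι → Trace AP) → (ℕ → ι → ℕ) → Formula AP → Prop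
  | _, T, τ, .atom p => ∀ i, p ∈ T i (τ 0 i)
  | _, T, τ, .natom p => ∀ i, p ∉ T i (τ 0 i)
  | _, T, τ, .and φ ψ => sat T τ φ ∧ sat T τ ψ
  | ι, T, τ, .or φ ψ =>
      ∃ P : ι → Prop,
        sat (fun i : {i // P i} => T i.1) (fun n i => τ n i.1) φ ∧
        sat (fun i : {i // ¬ P i} => T i.1) (fun n i => τ n i.1) ψ
  | _, T, τ, .X φ => sat T (shift τ 1) φ
  | _, T, τ, .U φ ψ =>
      ∃ k, sat T (shift τ k) ψ ∧ ∀ m, m < k → sat T (shift τ m) φ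
  | _, T, τ, .W φ ψ =>
      ∀ k, sat T (shift τ k) φ ∨ ∃ m, m ≤ k ∧ sat T (shift τ m) ψ

def satE {AP ι : Type} (T : ι → Trace AP) (φ : Formula AP) : Prop :=
  ∃ τ : ℕ → ι → ℕ, IsTef τ ∧ Initial τ ∧ sat T τ φ

def satA {AP ι : Type} (T : ι → Trace AP) (φ : Formula AP) : Prop :=
  ∀ τ : ℕ → ι → ℕ, IsTef τ → Initial τ → sat T τ φ

def satS {AP ι : Type} (T : ι → Trace AP) (φ : Formula AP) : Prop :=
  sat T (fun n _ => n) φ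

def tshift {AP : Type} (t : Trace AP) (k : ℕ) : Trace AP := fun n => t (n + k)

def ltlSat {AP : Type} : Trace AP → Formula AP → Prop
  | t, .atom p => p ∈ t 0
  | t, .natom p => p ∉ t 0
  | t, .and φ ψ => ltlSat t φ ∧ ltlSat t ψ
  | t, .or φ ψ => ltlSat t φ ∨ ltlSat t ψ
  | t, .X φ => ltlSat (tshift t 1) φ
  | t, .U φ ψ => ∃ k, ltlSat (tshift t k) ψ ∧ ∀ m, m < k → ltlSat (tshift t m) φ
  | t, .W φ ψ => ∀ k, ltlSat (tshift t k) φ ∨ ∃ m, m ≤ k ∧ ltlSat (tshift t m) ψ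
theorem sat_empty {AP : Type} (φ : Formula AP) : ∀ {ι : Type} [IsEmpty ι]
    (T : ι → Trace AP) (τ : ℕ → ι → ℕ), sat T τ φ := by
  induction φ with
  | atom p => intro ι _ T τ; simp only [sat]; exact fun i => isEmptyElim i
  | natom p => intro ι _ T τ; simp only [sat]; exact fun i => isEmptyElim i
  | and φ ψ h1 h2 => intro ι _ T τ; simp only [sat]; exact ⟨h1 _ _, h2 _ _⟩
  | or φ ψ h1 h2 =>
    intro ι _ T τ; simp only [sat]; exact ⟨fun _ => True, h1 _ _, h2 _ _⟩
  | X φ h => intro ι _ T τ; simp only [sat]; exact h _ _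
  | U φ ψ h1 h2 => intro ι _ T τ; simp only [sat]; exact ⟨0, h2 _ _, fun _ _ => h1 _ _⟩
  | W φ ψ h1 h2 => intro ι _ T τ; simp only [sat]; exact fun k => Or.inl (h1 _ _)

theorem sat_single {AP : Type} (φ : Formula AP) : ∀ {ι : Type} [Nonempty ι] [Subsingleton ι]
    (T : ι → Trace AP) (τ : ℕ → ι → ℕ) (t : Trace AP) (_ : ∀ n i, T i (τ n i) = t n),
    sat T τ φ ↔ ltlSat t φ := by
  induction φ with
  | atom p => intro ι _ _ T τ t h; simp [sat, ltlSat, h]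
  | natom p => intro ι _ _ T τ t h; simp [sat, ltlSat, h]
  | and φ ψ h1 h2 => intro ι _ _ T τ t h; simp only [sat, ltlSat, h1 T τ t h, h2 T τ t h]
  | or φ ψ h1 h2 =>
    intro ι _ _ T τ t h
    simp only [sat, ltlSat]
    constructor
    · rintro ⟨P, a, b⟩
      obtain ⟨i⟩ := ‹Nonempty ι›
      by_cases hP : P i
      · haveI : Nonempty {i // P i} := ⟨⟨i, hP⟩⟩
        exact Or.inl ((h1 _ _ t (fun n i => h n i.1)).1 a)
      · haveI : Nonempty {i // ¬ P i} := ⟨⟨i, hP⟩⟩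
        exact Or.inr ((h2 _ _ t (fun n i => h n i.1)).1 b)
    · obtain ⟨i⟩ := ‹Nonempty ι›
      rintro (a | b)
      · refine ⟨fun _ => True, ?_, ?_⟩
        · haveI : Nonempty {i : ι // True} := ⟨⟨i, trivial⟩⟩
          exact (h1 _ _ t (fun n i => h n i.1)).2 a
        · haveI : IsEmpty {i : ι // ¬ True} := ⟨fun x => x.2 trivial⟩
          exact sat_empty _ _ _
      · refine ⟨fun _ => False, ?_, ?_⟩
        · haveI : IsEmpty {i : ι // False} := ⟨fun x => x.2⟩
          exact sat_empty _ _ _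
        · haveI : Nonempty {i : ι // ¬ False} := ⟨⟨i, id⟩⟩
          exact (h2 _ _ t (fun n i => h n i.1)).2 b
  | X φ h1 =>
    intro ι _ _ T τ t h
    simp only [sat, ltlSat]
    exact h1 _ _ _ (fun n i => h (n + 1) i)
  | U φ ψ h1 h2 =>
    intro ι _ _ T τ t h
    have a := fun k => h1 T (shift τ k) (tshift t k) (fun n i => h (n + k) i)
    have b := fun k => h2 T (shift τ k) (tshift t k) (fun n i => h (n + k) i)
    simp only [sat, ltlSat, a, b]
  | W φ ψ h1 h2 =>
    intro ι _ _ T τ t h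
    have a := fun k => h1 T (shift τ k) (tshift t k) (fun n i => h (n + k) i)
    have b := fun k => h2 T (shift τ k) (tshift t k) (fun n i => h (n + k) i)
    simp only [sat, ltlSat, a, b]

/-- TeamLTL is a conservative extension of LTL: on a singleton team with any
initial tef, team satisfaction coincides with classical LTL satisfaction. -/
theorem conservative_extension (AP : Type) (φ : Formula AP) (t : Trace AP)
    (ι : Type) [Unique ι] (T : ι → Trace AP) (hT : ∀ i, T i = t)
    (τ : ℕ → ι → ℕ) (hτ : IsTef τ) (hinit : Initial τ) :
    sat T τ φ ↔ ltlSat t φ := by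
  have key : ∀ n i, τ n i = n := by
    intro n
    induction n with
    | zero => exact hinit
    | succ n ih =>
      intro i
      obtain ⟨h1, h2, h3⟩ := hτ
      have ne : τ n i ≠ τ (n + 1) i := by
        intro e
        apply h2 n
        funext j
        rw [Subsingleton.elim j i, e]
      have := h1 n i
      have := h3 n i
      have := ih i
      omega
  exact sat_single φ T τ t (fun n i => by rw [key, hT])

end TTS
end

section
/- Universal temporal team satisfaction is downward closed: for every TeamLTL formula φ, every team T with index set ι, and every subset ι' ⊆ ι, if T ⊨∀ φ then T↾ι' ⊨∀ φ. -/
namespace TTS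

theorem sat_comp {AP : Type} (φ : Formula AP) : ∀ {ι κ : Type} (f : κ → ι)
    (T : ι → Trace AP) (τ : ℕ → ι → ℕ), sat T τ φ →
    sat (fun j => T (f j)) (fun n j => τ n (f j)) φ := by
  induction φ with
  | atom p => intro ι κ f T τ h; simp only [sat] at h ⊢; exact fun j => h (f j)
  | natom p => intro ι κ f T τ h; simp only [sat] at h ⊢; exact fun j => h (f j)
  | and φ ψ ih1 ih2 =>
    intro ι κ f T τ h; simp only [sat] at h ⊢
    exact ⟨ih1 f T τ h.1, ih2 f T τ h.2⟩
  | or φ ψ ih1 ih2 =>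
    intro ι κ f T τ h; simp only [sat] at h ⊢
    obtain ⟨P, h1, h2⟩ := h
    exact ⟨fun j => P (f j),
      ih1 (fun j : {j // P (f j)} => (⟨f j.1, j.2⟩ : {i // P i})) _ _ h1,
      ih2 (fun j : {j // ¬ P (f j)} => (⟨f j.1, j.2⟩ : {i // ¬ P i})) _ _ h2⟩
  | X φ ih => intro ι κ f T τ h; simp only [sat] at h ⊢; exact ih f T _ h
  | U φ ψ ih1 ih2 =>
    intro ι κ f T τ h; simp only [sat] at h ⊢
    obtain ⟨k, h1, h2⟩ := h
    exact ⟨k, ih2 f T _ h1, fun m hm => ih1 f T _ (h2 m hm)⟩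
  | W φ ψ ih1 ih2 =>
    intro ι κ f T τ h; simp only [sat] at h ⊢
    intro k
    rcases h k with h1 | ⟨m, hm, h2⟩
    · exact Or.inl (ih1 f T _ h1)
    · exact Or.inr ⟨m, hm, ih2 f T _ h2⟩

/-- Universal temporal team satisfaction is downward closed. -/
theorem satA_downward_closed (AP ι : Type) (φ : Formula AP)
    (T : ι → Trace AP) (s : Set ι) (h : satA T φ) :
    satA (fun i : s => T i.1) φ := by
  classical
  intro τ hτ h0
  let τ' : ℕ → ι → ℕ := fun n i => if hi : i ∈ s then τ n ⟨i, hi⟩ else 0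
  have key : (fun n (j : s) => τ' n j.1) = τ := by
    funext n j
    simp [τ']
  have h1 : IsTef τ' := by
    refine ⟨fun n i => ?_, fun n hn => ?_, fun n i => ?_⟩
    · by_cases hi : i ∈ s
      · simpa [τ', hi] using hτ.1 n ⟨i, hi⟩
      · simp [τ', hi]
    · apply hτ.2.1 n
      rw [← key]
      funext j
      exact congrFun hn j.1
    · by_cases hi : i ∈ s
      · simpa [τ', hi] using hτ.2.2 n ⟨i, hi⟩
      · simp [τ', hi]
  have h2 : Initial τ' := by
    intro i
    by_cases hi : i ∈ s
    · simpa [τ', hi] using h0 ⟨i, hi⟩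
    · simp [τ', hi]
  have h3 := sat_comp φ (fun j : s => j.1) T τ' (h τ' h1 h2)
  rw [key] at h3
  exact h3

end TTS
end

section
/- Reduct lemma: let T be a team with index set ι, let ι' ⊆ ι, let τ' be a stuttering tef for ι, and let τ be the restriction of τ' to ι'. Then for every TeamLTL formula φ, if (T,τ') ⊨ φ then (T↾ι', τ) ⊨ φ. -/
namespace TTS

theorem sat_comap {AP : Type} (φ : Formula AP) : ∀ {ι κ : Type} (f : κ → ι)
    (T : ι → Trace AP) (τ : ℕ → ι → ℕ), sat T τ φ →
    sat (fun i => T (f i)) (fun n i => τ n (f i)) φ := by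
  induction φ with
  | atom p =>
    intro ι κ f T τ h
    simp only [sat] at h ⊢
    exact fun i => h (f i)
  | natom p =>
    intro ι κ f T τ h
    simp only [sat] at h ⊢
    exact fun i => h (f i)
  | and φ ψ ih1 ih2 =>
    intro ι κ f T τ h
    simp only [sat] at h ⊢
    exact ⟨ih1 f T τ h.1, ih2 f T τ h.2⟩
  | or φ ψ ih1 ih2 =>
    intro ι κ f T τ h
    simp only [sat] at h ⊢
    obtain ⟨P, h1, h2⟩ := h
    exact ⟨fun i => P (f i),
      ih1 (fun i : {i // P (f i)} => (⟨f i.1, i.2⟩ : {i // P i})) _ _ h1,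
      ih2 (fun i : {i // ¬ P (f i)} => (⟨f i.1, i.2⟩ : {i // ¬ P i})) _ _ h2⟩
  | X φ ih =>
    intro ι κ f T τ h
    simp only [sat] at h ⊢
    exact ih f T _ h
  | U φ ψ ih1 ih2 =>
    intro ι κ f T τ h
    simp only [sat] at h ⊢
    obtain ⟨k, h1, h2⟩ := h
    exact ⟨k, ih2 f T _ h1, fun m hm => ih1 f T _ (h2 m hm)⟩
  | W φ ψ ih1 ih2 =>
    intro ι κ f T τ h
    simp only [sat] at h ⊢
    intro k
    rcases h k with h1 | ⟨m, hm, h2⟩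
    · exact Or.inl (ih1 f T _ h1)
    · exact Or.inr ⟨m, hm, ih2 f T _ h2⟩

/-- Reduct lemma: satisfaction transfers from a team to any subteam when the
stuttering tef of the subteam is the restriction of the tef of the full team. -/
theorem reduct_lemma (AP ι : Type) (T : ι → Trace AP) (s : Set ι)
    (τ' : ℕ → ι → ℕ) (hτ' : IsStutTef τ') (φ : Formula AP)
    (h : sat T τ' φ) :
    sat (fun i : s => T i.1) (fun n (i : s) => τ' n i.1) φ := by
  exact sat_comap φ (fun i : s => i.1) T τ' h

end TTS
end

section
/- Existential temporal team satisfaction is not downward closed: fix p ∈ AP and let t be the trace with t(0) = t(1) = {p} and t(n) = ∅ for all n ≥ 2. Let T be the team consisting of two copies of t (index set {1,2}, both indices mapped to t) and let S = T↾{1} be the subteam consisting of one copy of t. Then T ⊨∃ XXp, but it is not the case that S ⊨∃ XXp. -/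
namespace TTS

/-- Existential satisfaction is not downward closed: the doubleton team of two
copies of t = {p}{p}∅^ω satisfies XXp existentially, but its singleton subteam
does not. -/
theorem satE_not_downward_closed (AP : Type) (p : AP) (t : Trace AP)
    (h0 : t 0 = {p}) (h1 : t 1 = {p}) (h2 : ∀ n, 2 ≤ n → t n = ∅) :
    satE (fun _ : Fin 2 => t) (.X (.X (.atom p))) ∧
    ¬ satE (fun i : ({0} : Set (Fin 2)) => (fun _ : Fin 2 => t) i.1)
        (.X (.X (.atom p))) := by
  constructor
  · refine ⟨fun n i => (n + 1 - i.1) / 2, ⟨?_, ?_, ?_⟩, ?_, ?_⟩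
    · intro n i
      dsimp only
      omega
    · intro n h
      have a := congrFun h 0
      have b := congrFun h 1
      simp at a b
      omega
    · intro n i
      dsimp only
      omega
    · intro i
      dsimp only
      omega
    · simp only [sat, shift]
      intro i
      have h : (0 + 1 + 1 + 1 - i.1) / 2 = 1 := by omega
      rw [h, h1]
      rfl
  · rintro ⟨τ, ⟨hm, hs, -⟩, -, h⟩
    simp only [sat, shift] at h
    have key : ∀ n, τ n ⟨0, rfl⟩ < τ (n + 1) ⟨0, rfl⟩ := by
      intro n
      refine lt_of_le_of_ne (hm n _) fun he => hs n ?_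
      funext ⟨i, hi⟩
      obtain rfl : i = 0 := hi
      exact he
    have k0 := key 0
    have k1 := key 1
    have hp := h ⟨0, rfl⟩
    rw [h2 _ (by simp only [Nat.zero_add, Nat.reduceAdd] at *; omega)] at hp
    exact hp

end TTS
end

section
/- Existential and synchronous satisfiability of TeamLTL coincide: for every TeamLTL formula φ, there exists a nonempty team T with T ⊨∃ φ if and only if there exists a nonempty team T' with T' ⊨ₛ φ. -/
namespace TTS

theorem sat_congr' {AP : Type} (φ : Formula AP) : ∀ {ι : Type} (T T' : ι → Trace AP)
    (τ τ' : ℕ → ι → ℕ), (∀ n i, T i (τ n i) = T' i (τ' n i)) → sat T τ φ → sat T' τ' φ := by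
  induction φ with
  | atom p =>
    intro ι T T' τ τ' h hs
    simp only [sat] at hs ⊢
    intro i; rw [← h]; exact hs i
  | natom p =>
    intro ι T T' τ τ' h hs
    simp only [sat] at hs ⊢
    intro i; rw [← h]; exact hs i
  | and φ ψ ih1 ih2 =>
    intro ι T T' τ τ' h hs
    simp only [sat] at hs ⊢
    exact ⟨ih1 _ _ _ _ h hs.1, ih2 _ _ _ _ h hs.2⟩
  | or φ ψ ih1 ih2 =>
    intro ι T T' τ τ' h hs
    simp only [sat] at hs ⊢
    obtain ⟨P, h1, h2⟩ := hs
    exact ⟨P, ih1 _ _ _ _ (fun n i => h n i.1) h1, ih2 _ _ _ _ (fun n i => h n i.1) h2⟩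
  | X φ ih =>
    intro ι T T' τ τ' h hs
    simp only [sat] at hs ⊢
    exact ih _ _ _ _ (fun n i => h (n + 1) i) hs
  | U φ ψ ih1 ih2 =>
    intro ι T T' τ τ' h hs
    simp only [sat] at hs ⊢
    obtain ⟨k, h1, h2⟩ := hs
    exact ⟨k, ih2 _ _ _ _ (fun n i => h (n + k) i) h1,
      fun m hm => ih1 _ _ _ _ (fun n i => h (n + m) i) (h2 m hm)⟩
  | W φ ψ ih1 ih2 =>
    intro ι T T' τ τ' h hs
    simp only [sat] at hs ⊢
    intro k
    rcases hs k with h1 | ⟨m, hm, h2⟩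
    · exact Or.inl (ih1 _ _ _ _ (fun n i => h (n + k) i) h1)
    · exact Or.inr ⟨m, hm, ih2 _ _ _ _ (fun n i => h (n + m) i) h2⟩

/-- Existential and synchronous satisfiability of TeamLTL coincide. -/
theorem satE_satS_equisatisfiable (AP : Type) (φ : Formula AP) :
    (∃ (ι : Type) (T : ι → Trace AP), Nonempty ι ∧ satE T φ) ↔
    (∃ (ι : Type) (T : ι → Trace AP), Nonempty ι ∧ satS T φ) := by
  constructor
  · rintro ⟨ι, T, hne, τ, -, -, hs⟩
    exact ⟨ι, fun i n => T i (τ n i), hne, sat_congr' φ _ _ _ _ (fun _ _ => rfl) hs⟩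
  · rintro ⟨ι, T, ⟨i⟩, hs⟩
    refine ⟨ι, T, ⟨i⟩, fun n _ => n, ⟨fun n _ => Nat.le_succ n, fun n h => ?_, fun n _ => le_rfl⟩,
      fun _ => rfl, hs⟩
    have := congrFun h i
    simp at this

end TTS
end

section
/- Stretching lemma: let T = (t_i)_{i∈ι} be a team and τ an initial tef for ι. Define the team T_τ = (t'_i)_{i∈ι} by t'_i(n) := t_i(τ(n)(i)). Then for every TeamLTL formula φ, (T,τ) ⊨ φ if and only if T_τ ⊨ₛ φ. -/
namespace TTS

theorem sat_congr_aux {AP : Type} (φ : Formula AP) : ∀ {ι : Type} (T T' : ι → Trace AP)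
    (τ τ' : ℕ → ι → ℕ), (∀ n i, T i (τ n i) = T' i (τ' n i)) → (sat T τ φ ↔ sat T' τ' φ) := by
  induction φ with
  | atom p => intro ι T T' τ τ' h; simp only [sat, h]
  | natom p => intro ι T T' τ τ' h; simp only [sat, h]
  | and φ ψ h1 h2 =>
    intro ι T T' τ τ' h
    simp only [sat]
    rw [h1 T T' τ τ' h, h2 T T' τ τ' h]
  | or φ ψ h1 h2 =>
    intro ι T T' τ τ' h
    simp only [sat]
    exact exists_congr fun P => and_congr
      (h1 _ _ _ _ fun n i => h n i.1) (h2 _ _ _ _ fun n i => h n i.1)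
  | X φ h1 =>
    intro ι T T' τ τ' h
    simp only [sat]
    exact h1 _ _ _ _ fun n i => h (n + 1) i
  | U φ ψ h1 h2 =>
    intro ι T T' τ τ' h
    simp only [sat]
    exact exists_congr fun k => and_congr (h2 _ _ _ _ fun n i => h (n + k) i)
      (forall_congr' fun m => imp_congr Iff.rfl (h1 _ _ _ _ fun n i => h (n + m) i))
  | W φ ψ h1 h2 =>
    intro ι T T' τ τ' h
    simp only [sat]
    exact forall_congr' fun k => or_congr (h1 _ _ _ _ fun n i => h (n + k) i)
      (exists_congr fun m => and_congr Iff.rfl (h2 _ _ _ _ fun n i => h (n + m) i))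

/-- Stretching lemma: satisfaction under an initial tef τ coincides with
synchronous satisfaction of the stretched team T_τ. -/
theorem stretching_lemma (AP ι : Type) (T : ι → Trace AP)
    (τ : ℕ → ι → ℕ) (hτ : IsTef τ) (hinit : Initial τ) (φ : Formula AP) :
    sat T τ φ ↔ satS (fun i n => T i (τ n i)) φ := by
  exact sat_congr_aux φ _ _ _ _ fun _ _ => rfl

end TTS
end

section
/- Embedding of synchronous TeamLTL into ∃TeamLTL: let φ'_synch := o ∧ G((o ∧ X¬o) ∨ (¬o ∧ Xo)). For every TeamLTL formula φ over AP and every nonempty team T over AP: T ⊨ₛ φ if and only if T_o ⊨∃ (φ ∧ φ'_synch). -/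
namespace TTS

/-- Mapping a formula along a renaming of atomic propositions. -/
def Formula.map {AP AP' : Type} (f : AP → AP') : Formula AP → Formula AP'
  | .atom p => .atom (f p)
  | .natom p => .natom (f p)
  | .and φ ψ => .and (φ.map f) (ψ.map f)
  | .or φ ψ => .or (φ.map f) (ψ.map f)
  | .X φ => .X (φ.map f)
  | .U φ ψ => .U (φ.map f) (ψ.map f)
  | .W φ ψ => .W (φ.map f) (ψ.map f)

/-- The team T_o over AP ∪ {o}: the fresh proposition o (here: none) is added
at exactly the even positions of every trace. -/
def addO {AP ι : Type} (T : ι → Trace AP) : ι → Trace (Option AP) :=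
  fun i n => {x | (∃ p, x = some p ∧ p ∈ T i n) ∨ (x = none ∧ Even n)}

/-- Gφ := φ W ⊥, with ⊥ := o ∧ ¬o for the fresh proposition o. -/
def G' {AP : Type} (φ : Formula (Option AP)) : Formula (Option AP) :=
  .W φ (.and (.atom none) (.natom none))

/-- φ'_synch := o ∧ G((o ∧ X¬o) ∨ (¬o ∧ Xo)). -/
def phiSynch' (AP : Type) : Formula (Option AP) :=
  .and (.atom none)
    (G' (.or (.and (.atom none) (.X (.natom none)))
             (.and (.natom none) (.X (.atom none)))))

theorem mem_addO_some {AP ι : Type} (T : ι → Trace AP) (i : ι) (n : ℕ) (p : AP) :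
    some p ∈ addO T i n ↔ p ∈ T i n := by
  simp [addO]

theorem mem_addO_none {AP ι : Type} (T : ι → Trace AP) (i : ι) (n : ℕ) :
    none ∈ addO T i n ↔ Even n := by
  simp [addO]

theorem sat_map {AP : Type} (φ : Formula AP) : ∀ {ι : Type} (T : ι → Trace AP) (τ : ℕ → ι → ℕ),
    sat (addO T) τ (φ.map some) ↔ sat T τ φ := by
  induction φ with
  | atom p => intro ι T τ; simp [Formula.map, sat, mem_addO_some]
  | natom p => intro ι T τ; simp [Formula.map, sat, mem_addO_some]
  | and φ ψ h1 h2 => intro ι T τ; simp [Formula.map, sat, h1, h2]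
  | or φ ψ h1 h2 =>
    intro ι T τ
    simp only [Formula.map, sat]
    exact exists_congr fun P => and_congr (h1 (fun i : {i // P i} => T i.1) _)
      (h2 (fun i : {i // ¬ P i} => T i.1) _)
  | X φ h1 => intro ι T τ; simp [Formula.map, sat, h1]
  | U φ ψ h1 h2 => intro ι T τ; simp [Formula.map, sat, h1, h2]
  | W φ ψ h1 h2 => intro ι T τ; simp [Formula.map, sat, h1, h2]

/-- Embedding of synchronous TeamLTL into ∃TeamLTL via φ'_synch. -/
theorem embed_sync_into_existsTeamLTL (AP ι : Type) (hne : Nonempty ι)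
    (T : ι → Trace AP) (φ : Formula AP) :
    satS T φ ↔ satE (addO T) (.and (φ.map some) (phiSynch' AP)) := by
  obtain ⟨i0⟩ := hne
  constructor
  · intro h
    refine ⟨fun n _ => n, ⟨fun n i => Nat.le_succ n, fun n hn => ?_, fun n i => le_refl _⟩,
      fun i => rfl, (sat_map φ T _).2 h, ?_, ?_⟩
    · have := congrFun hn i0
      simp at this
    · intro i
      simp [mem_addO_none]
    · intro k
      left
      refine ⟨fun _ => Even k, ⟨fun i => ?_, fun i => ?_⟩, ⟨fun i => ?_, fun i => ?_⟩⟩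
      · exact (mem_addO_none T i.1 _).2 (by simpa [shift] using i.2)
      · refine fun hh => absurd ((mem_addO_none T i.1 _).1 hh) ?_
        have := i.2
        simp only [shift]
        grind
      · refine fun hh => absurd ((mem_addO_none T i.1 _).1 hh) ?_
        simpa [shift] using i.2
      · refine (mem_addO_none T i.1 _).2 ?_
        have := i.2
        simp only [shift]
        grind
  · rintro ⟨τ, ⟨hm, _, hs⟩, h0, hφ, _, hG⟩
    have key : ∀ n i, τ n i = n := by
      intro n
      induction n with
      | zero => exact h0
      | succ k ih =>
        intro i
        have h1 := hm k i
        have h2 := hs k i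
        have hk := ih i
        rcases hG k with ⟨P, ⟨ha, hb⟩, hc, hd⟩ | ⟨m, _, ha, hb⟩
        · by_cases hP : P i
          · have a := (mem_addO_none T i _).1 (ha ⟨i, hP⟩)
            have b := fun e => hb ⟨i, hP⟩ ((mem_addO_none T i _).2 e)
            simp only [shift, Nat.zero_add, Nat.add_comm 1 k] at a b
            by_contra hne
            have : τ (k + 1) i = τ k i := by omega
            exact b (this ▸ a)
          · have a := fun e => hc ⟨i, hP⟩ ((mem_addO_none T i _).2 e)
            have b := (mem_addO_none T i _).1 (hd ⟨i, hP⟩)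
            simp only [shift, Nat.zero_add, Nat.add_comm 1 k] at a b
            by_contra hne
            have : τ (k + 1) i = τ k i := by omega
            exact a (this ▸ b)
        · exact absurd (ha i) (hb i)
    have : τ = fun n _ => n := by
      funext n i
      exact key n i
    subst this
    exact (sat_map φ T _).1 hφ

end TTS
end
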